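/- arXiv:2107.00006 — 2 statements merged into one kernel-verified Lean document; each statement's English description precedes it below -/
import Mathlib

section
/- Let (Y_r)_{r∈ℝ₊} be an integrable submartingale with sup_{r∈ℝ₊} E[|Y_r|] < ∞. Then there exist a nonnegative martingale (U_r)_{r∈ℝ₊} and a nonnegative supermartingale (W_r)_{r∈ℝ₊}, both with uniformly bounded L¹ norms, such that Y_r = U_r − W_r for all r (Krickeberg decomposition). -/
open MeasureTheory Filter

/-- Krickeberg decomposition: an L¹-bounded submartingale is the difference of a
nonnegative martingale and a nonnegative supermartingale, both L¹-bounded. -/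
theorem krickeberg_decomposition
    {Ω : Type*} {m0 : MeasurableSpace Ω} {μ : Measure Ω} [IsProbabilityMeasure μ]
    (ℱ : Filtration NNReal m0) (Y : NNReal → Ω → ℝ) (hY : Submartingale Y ℱ μ)
    (hbdd : ∃ C : ℝ, ∀ r : NNReal, ∫ ω, |Y r ω| ∂μ ≤ C) :
    ∃ (U W : NNReal → Ω → ℝ),
      Martingale U ℱ μ ∧ Supermartingale W ℱ μ ∧
      (∀ r, 0 ≤ᵐ[μ] U r) ∧ (∀ r, 0 ≤ᵐ[μ] W r) ∧
      (∃ C : ℝ, ∀ r, ∫ ω, |U r ω| ∂μ ≤ C) ∧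
      (∃ C : ℝ, ∀ r, ∫ ω, |W r ω| ∂μ ≤ C) ∧
      ∀ r, Y r =ᵐ[μ] fun ω => U r ω - W r ω := by
  obtain ⟨C, hC⟩ := hbdd
  have hP : Submartingale (fun r ω => (Y r ω)⁺) ℱ μ := hY.pos
  set P : NNReal → Ω → ℝ := fun r ω => (Y r ω)⁺ with hPdef
  have hPC : ∀ r, ∫ ω, P r ω ∂μ ≤ C := fun r =>
    (integral_mono (hP.integrable r) (hY.integrable r).abs
      (fun ω => sup_le (le_abs_self (Y r ω)) (abs_nonneg (Y r ω)))).trans (hC r)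
  have hPmono : Monotone (fun n : ℕ => ∫ ω, P n ω ∂μ) := by
    intro m n hmn
    have := hP.setIntegral_le (i := (m : NNReal)) (j := (n : NNReal)) (by exact_mod_cast hmn)
      MeasurableSet.univ
    simpa using this
  have hPconv : CauchySeq (fun n : ℕ => ∫ ω, P n ω ∂μ) :=
    (tendsto_atTop_ciSup hPmono ⟨C, by rintro _ ⟨n, rfl⟩; exact hPC n⟩).cauchySeq
  have hint : ∀ r (n : ℕ), MemLp (μ[P n | ℱ r]) 1 μ := fun r n =>
    memLp_one_iff_integrable.2 integrable_condExp
  have hBmono : ∀ (r : NNReal) (s t : NNReal), r ≤ s → s ≤ t →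
      μ[P s | ℱ r] ≤ᵐ[μ] μ[P t | ℱ r] := by
    intro r s t hrs hst
    have h1 := condExp_mono (m := ℱ r) (hP.integrable s)
      (integrable_condExp (m := ℱ s) (f := P t)) (hP.2.1 s t hst)
    exact h1.trans (condExp_condExp_of_le (ℱ.mono hrs) (ℱ.le s)).le
  have hL : ∀ r : NNReal, ∃ L : Lp ℝ 1 μ,
      Tendsto (fun n : ℕ => (hint r n).toLp _) atTop (nhds L) := by
    intro r
    apply cauchySeq_tendsto_of_complete
    obtain ⟨N0, hN0⟩ := exists_nat_ge r
    rw [Metric.cauchySeq_iff']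
    intro ε hε
    obtain ⟨N, hN⟩ := Metric.cauchySeq_iff.1 hPconv ε hε
    refine ⟨max N N0, fun n hn => ?_⟩
    have h2 := hN n (le_trans (le_max_left _ _) hn) (max N N0) (le_max_left _ _)
    refine lt_of_eq_of_lt ?_ h2
    have hr : r ≤ ((max N N0 : ℕ) : NNReal) :=
      hN0.trans (by exact_mod_cast le_max_right _ _)
    have hm := hBmono r ((max N N0 : ℕ) : NNReal) n hr (by exact_mod_cast hn)
    rw [dist_eq_norm, ← MemLp.toLp_sub, L1.norm_eq_integral_norm, Real.dist_eq,
      abs_of_nonneg (sub_nonneg.2 (hPmono hn))]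
    beta_reduce
    rw [← integral_condExp (ℱ.le r) (f := P n),
      ← integral_condExp (ℱ.le r) (f := P ((max N N0 : ℕ) : NNReal)),
      ← integral_sub integrable_condExp integrable_condExp]
    apply integral_congr_ae
    filter_upwards [((hint r n).sub (hint r (max N N0))).coeFn_toLp, hm] with ω h3 h4
    rw [h3, Pi.sub_apply, Real.norm_eq_abs, abs_of_nonneg (sub_nonneg.2 h4)]
  choose L hL using hL
  have hLe : ∀ r, Tendsto (fun n : ℕ => eLpNorm (μ[P n | ℱ r] - (L r : Ω → ℝ)) 1 μ)
      atTop (nhds 0) := by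
    intro r
    have := (Lp.tendsto_Lp_iff_tendsto_eLpNorm' _ _).1 (hL r)
    refine this.congr fun n => eLpNorm_congr_ae ?_
    exact (hint r n).coeFn_toLp.sub (EventuallyEq.refl _ _)
  have hLint : ∀ r, Integrable (L r) μ := fun r => L1.integrable_coeFn _
  have key : ∀ r s, r ≤ s → μ[(L s : Ω → ℝ) | ℱ r] =ᵐ[μ] L r := by
    intro r s hrs
    have hz : eLpNorm (μ[(L s : Ω → ℝ) | ℱ r] - (L r : Ω → ℝ)) 1 μ = 0 := by
      refine le_antisymm ?_ zero_le
      have hsum := (hLe s).add (hLe r)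
      rw [add_zero] at hsum
      refine ge_of_tendsto' hsum fun n => ?_
      have e1 : μ[μ[P n | ℱ s] - (L s : Ω → ℝ) | ℱ r] =ᵐ[μ]
          μ[P n | ℱ r] - μ[(L s : Ω → ℝ) | ℱ r] :=
        (condExp_sub integrable_condExp (hLint s) _).trans
          ((condExp_condExp_of_le (ℱ.mono hrs) (ℱ.le s)).sub (EventuallyEq.refl _ _))
      have e2 : eLpNorm (μ[(L s : Ω → ℝ) | ℱ r] - μ[P n | ℱ r]) 1 μ ≤
          eLpNorm (μ[P n | ℱ s] - (L s : Ω → ℝ)) 1 μ := by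
        rw [eLpNorm_sub_comm, ← eLpNorm_congr_ae e1]
        exact eLpNorm_condExp_le_eLpNorm _ le_rfl
      have e3 := eLpNorm_add_le (p := 1) (μ := μ)
        (f := μ[(L s : Ω → ℝ) | ℱ r] - μ[P n | ℱ r]) (g := μ[P n | ℱ r] - (L r : Ω → ℝ))
        (integrable_condExp.sub integrable_condExp).aestronglyMeasurable
        (integrable_condExp.sub (hLint r)).aestronglyMeasurable le_rfl
      rw [sub_add_sub_cancel] at e3
      exact e3.trans (add_le_add_left e2 _)
    rw [eLpNorm_eq_zero_iff (integrable_condExp.sub (hLint r)).aestronglyMeasurable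
      one_ne_zero] at hz
    filter_upwards [hz] with ω h
    exact sub_eq_zero.1 h
  have hPL : ∀ r, P r ≤ᵐ[μ] L r := by
    intro r
    have hPr : MemLp (P r) 1 μ := memLp_one_iff_integrable.2 (hP.integrable r)
    have : hPr.toLp _ ≤ L r := by
      refine ge_of_tendsto (hL r) ?_
      obtain ⟨N0, hN0⟩ := exists_nat_ge r
      filter_upwards [eventually_ge_atTop N0] with n hn
      rw [← Lp.coeFn_le]
      filter_upwards [hPr.coeFn_toLp, (hint r n).coeFn_toLp,
        hP.2.1 r n (hN0.trans (by exact_mod_cast hn))] with ω h1 h2 h3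
      rw [h1, h2]; exact h3
    rw [← Lp.coeFn_le] at this
    filter_upwards [this, hPr.coeFn_toLp] with ω h1 h2
    rw [← h2]; exact h1
  have hU : Martingale (fun r => μ[(L r : Ω → ℝ) | ℱ r]) ℱ μ :=
    ⟨fun r => stronglyMeasurable_condExp, fun r s hrs =>
      (condExp_condExp_of_le (ℱ.mono hrs) (ℱ.le s)).trans
        ((key r s hrs).trans (key r r le_rfl).symm)⟩
  set U : NNReal → Ω → ℝ := fun r => μ[(L r : Ω → ℝ) | ℱ r] with hUdef
  have hPU : ∀ r, P r ≤ᵐ[μ] U r := fun r => (hPL r).trans (key r r le_rfl).symm.le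
  have hU0 : ∀ r, 0 ≤ᵐ[μ] U r := by
    intro r
    filter_upwards [hPU r] with ω h
    exact (posPart_nonneg (Y r ω)).trans h
  have hUI : ∀ r, ∫ ω, |U r ω| ∂μ = ∫ ω, U 0 ω ∂μ := by
    intro r
    have h1 : ∫ ω, |U r ω| ∂μ = ∫ ω, U r ω ∂μ := by
      apply integral_congr_ae
      filter_upwards [hU0 r] with ω h
      exact abs_of_nonneg h
    have h2 := hU.setIntegral_eq (zero_le : (0 : NNReal) ≤ r) MeasurableSet.univ
    simp only [Measure.restrict_univ] at h2
    rw [h1, h2]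
  refine ⟨U, U - Y, hU, hU.supermartingale.sub_submartingale hY, hU0, ?_,
    ⟨_, fun r => (hUI r).le⟩, ⟨∫ ω, U 0 ω ∂μ + C, fun r => ?_⟩, fun r => ?_⟩
  · intro r
    filter_upwards [hPU r] with ω h
    exact sub_nonneg.2 ((le_posPart (Y r ω)).trans h)
  · calc ∫ ω, |(U - Y) r ω| ∂μ ≤ ∫ ω, (|U r ω| + |Y r ω|) ∂μ :=
          integral_mono ((hU.integrable r).sub (hY.integrable r)).abs
            ((hU.integrable r).abs.add (hY.integrable r).abs) (fun ω => abs_sub _ _)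
      _ = ∫ ω, |U r ω| ∂μ + ∫ ω, |Y r ω| ∂μ :=
          integral_add (hU.integrable r).abs (hY.integrable r).abs
      _ ≤ _ := add_le_add (hUI r).le (hC r)
  · exact Eventually.of_forall fun ω => by simp
end

section
/- Let u ∈ ℝ, let D be a countable dense subset of ℝ, and let (Y_r)_{r∈ℝ} be an integrable submartingale. Then there exist integrable random variables V and V' such that Y_r → V a.s. as r ↓ u along D, Y_r → V' a.s. as r ↑ u along D, with E[V | F_u] ≥ Y_u a.s. and E[Y_u | F_{u−}] ≥ V' a.s. -/
open MeasureTheory Filter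

/-- `UpChain y a b S k t`: there are `k` successive upcrossings of `[a,b]` by `y` along `S`, all
before time `t`. -/
def UpChain (y : ℝ → ℝ) (a b : ℝ) (S : Set ℝ) : ℕ → ℝ → Prop
  | 0, _ => True
  | k + 1, t => ∃ r ∈ S, ∃ s ∈ S, r < s ∧ s < t ∧ y r < a ∧ b < y s ∧ UpChain y a b S k r

lemma UpChain.mono_set {y : ℝ → ℝ} {a b : ℝ} {S T : Set ℝ} (hST : S ⊆ T) :
    ∀ {k : ℕ} {t : ℝ}, UpChain y a b S k t → UpChain y a b T k t
  | 0, _, _ => trivial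
  | _ + 1, _, ⟨r, hr, s, hs, h1, h2, h3, h4, h5⟩ =>
    ⟨r, hST hr, s, hST hs, h1, h2, h3, h4, h5.mono_set hST⟩

lemma UpChain.mono_time {y : ℝ → ℝ} {a b : ℝ} {S : Set ℝ} :
    ∀ {k : ℕ} {t t' : ℝ}, t ≤ t' → UpChain y a b S k t → UpChain y a b S k t'
  | 0, _, _, _, _ => trivial
  | _ + 1, _, _, h, ⟨r, hr, s, hs, h1, h2, h3, h4, h5⟩ =>
    ⟨r, hr, s, hs, h1, h2.trans_le h, h3, h4, h5⟩

lemma UpChain.exists_finset {y : ℝ → ℝ} {a b : ℝ} {S : Set ℝ} :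
    ∀ {k : ℕ} {t : ℝ}, UpChain y a b S k t →
      ∃ F : Finset ℝ, (F : Set ℝ) ⊆ S ∧ UpChain y a b F k t
  | 0, _, _ => ⟨∅, by simp, trivial⟩
  | _ + 1, _, ⟨r, hr, s, hs, h1, h2, h3, h4, h5⟩ => by
    classical
    obtain ⟨F, hF, hc⟩ := h5.exists_finset
    refine ⟨insert r (insert s F), ?_, r, by simp, s, by simp, h1, h2, h3, h4,
      hc.mono_set (by intro x hx; simp at hx ⊢; tauto)⟩
    intro x hx
    simp at hx
    rcases hx with rfl | rfl | hx
    · exact hr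
    · exact hs
    · exact hF hx

/-- Submartingale sampled along a monotone sequence of times. -/
def sampleFiltration {Ω : Type*} {m0 : MeasurableSpace Ω} (ℱ : Filtration ℝ m0)
    (τ : ℕ → ℝ) (hτ : Monotone τ) : Filtration ℕ m0 where
  seq n := ℱ (τ n)
  mono' _ _ h := ℱ.mono (hτ h)
  le' n := ℱ.le (τ n)

section
variable {Ω : Type*} {m0 : MeasurableSpace Ω} {μ : Measure Ω}

lemma sample_submartingale {ℱ : Filtration ℝ m0} {Y : ℝ → Ω → ℝ} (hY : Submartingale Y ℱ μ)
    (τ : ℕ → ℝ) (hτ : Monotone τ) :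
    Submartingale (fun n => Y (τ n)) (sampleFiltration ℱ τ hτ) μ :=
  ⟨fun n => hY.stronglyMeasurable (τ n), fun _ _ h => hY.ae_le_condExp (hτ h),
    fun n => hY.integrable (τ n)⟩

lemma upchain_le_upcrossings {Y : ℝ → Ω → ℝ} {ω : Ω} {a b : ℝ} (hab : a < b) (N : ℕ)
    (τ : ℕ → ℝ) (hτ : Monotone τ) (F : Set ℝ) (hF : ∀ r ∈ F, ∃ i < N, τ i = r) :
    ∀ (k : ℕ) (t : ℝ), UpChain (fun r => Y r ω) a b F k t →
      ∃ M ≤ N, k ≤ upcrossingsBefore a b (fun n => Y (τ n)) M ω ∧ ∀ n < M, τ n < t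
  | 0, _, _ => ⟨0, by simp, by simp, by simp⟩
  | k + 1, t, ⟨r, hr, s, hs, h1, h2, h3, h4, h5⟩ => by
    obtain ⟨M, hM, hk, hMt⟩ := upchain_le_upcrossings hab N τ hτ F hF k r h5
    obtain ⟨i, hi, rfl⟩ := hF r hr
    obtain ⟨j, hj, rfl⟩ := hF s hs
    have hMi : M ≤ i := by
      by_contra! h
      exact lt_irrefl _ (hMt i h)
    have hij : i ≤ j := by
      by_contra! h
      exact absurd (hτ h.le) (not_le.2 h1)
    refine ⟨j + 1, hj, ?_, fun n hn => (hτ (Nat.lt_succ_iff.1 hn)).trans_lt h2⟩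
    have := upcrossingsBefore_lt_of_exists_upcrossing (f := fun n => Y (τ n)) (ω := ω) hab
      hMi h3 hij h4
    omega

lemma finset_bound [IsProbabilityMeasure μ] {ℱ : Filtration ℝ m0} {Y : ℝ → Ω → ℝ}
    (hY : Submartingale Y ℱ μ) {a b : ℝ} (hab : a < b) (v : ℝ) (F : Finset ℝ)
    (hF : ∀ r ∈ F, r ≤ v) (k : ℕ) :
    (k : ℝ) * μ.real {ω | ∃ t, UpChain (fun r => Y r ω) a b F k t} ≤
      (∫ ω, (Y v ω - a)⁺ ∂μ) / (b - a) := by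
  classical
  let τ : ℕ → ℝ := fun n => if h : n < F.card then F.orderEmbOfFin rfl ⟨n, h⟩ else v
  have hτ : Monotone τ := by
    intro i j hij
    simp only [τ]
    split_ifs with h1 h2 h2
    · exact (F.orderEmbOfFin rfl).monotone (by simpa using hij)
    · exact hF _ (F.orderEmbOfFin_mem rfl _)
    · omega
    · exact le_rfl
  have hτF : ∀ r ∈ (F : Set ℝ), ∃ i < F.card, τ i = r := by
    intro r hr
    have : r ∈ Set.range (F.orderEmbOfFin rfl) := by
      rw [Finset.range_orderEmbOfFin]; exact hr
    obtain ⟨⟨i, hi⟩, h⟩ := this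
    exact ⟨i, hi, by simp [τ, hi, h]⟩
  have hs := sample_submartingale hY τ hτ
  have hb := hs.mul_integral_upcrossingsBefore_le_integral_pos_part a b F.card
  have hv : τ F.card = v := by simp [τ]
  rw [hv] at hb
  have hint := hs.stronglyAdapted.integrable_upcrossingsBefore (μ := μ) (N := F.card) hab
  have hmk := mul_meas_ge_le_integral_of_nonneg (μ := μ)
    (Eventually.of_forall fun ω => Nat.cast_nonneg _) hint (k : ℝ)
  have hsub : {ω | ∃ t, UpChain (fun r => Y r ω) a b F k t} ⊆
      {ω | (k : ℝ) ≤ (upcrossingsBefore a b (fun n => Y (τ n)) F.card ω : ℝ)} := by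
    rintro ω ⟨t, ht⟩
    obtain ⟨M, hM, hk, -⟩ := upchain_le_upcrossings hab F.card τ hτ F hτF k t ht
    have := upcrossingsBefore_mono (f := fun n => Y (τ n)) hab hM ω
    simp only [Set.mem_ofPred_eq, Nat.cast_le]
    exact hk.trans this
  have hab' : 0 < b - a := sub_pos.2 hab
  rw [le_div_iff₀ hab']
  calc _ ≤ (∫ ω, (upcrossingsBefore a b (fun n => Y (τ n)) F.card ω : ℝ) ∂μ) * (b - a) := by
        gcongr
        refine le_trans ?_ hmk
        gcongr
        exact measure_ne_top _ _
    _ ≤ _ := by rw [mul_comm]; exact hb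

lemma ae_bounded_upchain [IsProbabilityMeasure μ] {ℱ : Filtration ℝ m0} {Y : ℝ → Ω → ℝ}
    (hY : Submartingale Y ℱ μ) {a b : ℝ} (hab : a < b) (v : ℝ) (S : Set ℝ) (hSc : S.Countable)
    (hS : ∀ r ∈ S, r ≤ v) :
    ∀ᵐ ω ∂μ, ∃ k, ∀ t, ¬ UpChain (fun r => Y r ω) a b S k t := by
  classical
  set C := (∫ ω, (Y v ω - a)⁺ ∂μ) / (b - a) with hC
  have key : ∀ k : ℕ, (k : ℝ) * μ.real {ω | ∃ t, UpChain (fun r => Y r ω) a b S k t} ≤ C := by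
    intro k
    have := hSc.to_subtype
    let A : Finset S → Set Ω := fun G =>
      {ω | ∃ t, UpChain (fun r => Y r ω) a b ((G.image Subtype.val : Finset ℝ) : Set ℝ) k t}
    have hA : Monotone A := by
      rintro G H hGH ω ⟨t, ht⟩
      exact ⟨t, ht.mono_set (by exact_mod_cast Finset.image_subset_image hGH)⟩
    have hU : {ω | ∃ t, UpChain (fun r => Y r ω) a b S k t} ⊆ ⋃ G, A G := by
      rintro ω ⟨t, ht⟩
      obtain ⟨F, hF, hc⟩ := ht.exists_finset
      refine Set.mem_iUnion.2 ⟨F.subtype (· ∈ S), t, hc.mono_set ?_⟩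
      intro x hx
      simp only [Finset.coe_image, Set.mem_image, Finset.mem_coe, Finset.mem_subtype]
      exact ⟨⟨x, hF hx⟩, hx, rfl⟩
    rcases Nat.eq_zero_or_pos k with rfl | hk
    · have := finset_bound hY hab v ∅ (by simp) 0
      simpa using this
    have hk' : (0 : ℝ) < k := by exact_mod_cast hk
    have h1 : μ (⋃ G, A G) ≤ ENNReal.ofReal (C / k) := by
      rw [hA.measure_iUnion]
      refine iSup_le fun G => ?_
      have h2 := finset_bound hY hab v (G.image Subtype.val)
        (by intro r hr; simp at hr; exact hS r hr.1) k
      rw [← ENNReal.ofReal_toReal (measure_ne_top μ (A G))]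
      apply ENNReal.ofReal_le_ofReal
      rw [le_div_iff₀ hk', mul_comm]
      exact h2
    have hC0 : 0 ≤ C := div_nonneg (integral_nonneg fun ω => posPart_nonneg _) (sub_pos.2 hab).le
    have h3 : μ.real {ω | ∃ t, UpChain (fun r => Y r ω) a b S k t} ≤ C / k :=
      ENNReal.toReal_le_of_le_ofReal (by positivity) ((measure_mono hU).trans h1)
    rw [le_div_iff₀ hk'] at h3
    linarith
  rw [ae_iff]
  by_contra hne
  have hpos : 0 < μ.real {ω | ¬ ∃ k, ∀ t, ¬ UpChain (fun r => Y r ω) a b S k t} :=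
    ENNReal.toReal_pos hne (measure_ne_top _ _)
  set p := μ.real {ω | ¬ ∃ k, ∀ t, ¬ UpChain (fun r => Y r ω) a b S k t} with hp
  obtain ⟨k, hk⟩ := exists_nat_gt (C / p)
  rw [div_lt_iff₀ hpos] at hk
  have : p ≤ μ.real {ω | ∃ t, UpChain (fun r => Y r ω) a b S k t} := by
    apply measureReal_mono _ (measure_ne_top _ _)
    intro ω hω
    simp only [Set.mem_ofPred_eq] at hω ⊢
    push Not at hω
    exact hω k
  have := mul_le_mul_of_nonneg_left this (Nat.cast_nonneg (α := ℝ) k)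
  linarith [key k]

lemma l1_bound [IsProbabilityMeasure μ] {ℱ : Filtration ℝ m0} {Y : ℝ → Ω → ℝ}
    (hY : Submartingale Y ℱ μ) (c v : ℝ) :
    ∃ R : NNReal, ∀ r, c ≤ r → r ≤ v → eLpNorm (Y r) 1 μ ≤ R := by
  refine ⟨(2 * (∫ ω, (Y v ω)⁺ ∂μ) - ∫ ω, Y c ω ∂μ).toNNReal, fun r hc hv => ?_⟩
  have h1 : ∫ ω, Y c ω ∂μ ≤ ∫ ω, Y r ω ∂μ := by
    simpa using hY.setIntegral_le hc MeasurableSet.univ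
  have h2 : ∫ ω, (Y r ω)⁺ ∂μ ≤ ∫ ω, (Y v ω)⁺ ∂μ := by
    simpa using hY.pos.setIntegral_le hv MeasurableSet.univ
  have hi := hY.integrable r
  have hp : Integrable (fun ω => (Y r ω)⁺) μ := hi.pos_part
  have h3 : ∫ ω, |Y r ω| ∂μ = 2 * (∫ ω, (Y r ω)⁺ ∂μ) - ∫ ω, Y r ω ∂μ := by
    rw [← integral_const_mul, ← integral_sub (hp.const_mul 2) hi]
    congr 1
    ext ω
    rcases le_total (Y r ω) 0 with h | h
    · rw [abs_of_nonpos h, posPart_eq_zero.2 h]; ring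
    · rw [abs_of_nonneg h, posPart_eq_self.2 h]; ring
  rw [eLpNorm_one_eq_lintegral_enorm]
  rw [← ofReal_integral_norm_eq_lintegral_enorm hi]
  apply ENNReal.ofReal_le_ofReal
  simp only [Real.norm_eq_abs]
  linarith

lemma exists_limit [IsProbabilityMeasure μ] {ℱ : Filtration ℝ m0} {Y : ℝ → Ω → ℝ}
    (hY : Submartingale Y ℱ μ) (c v : ℝ) (S : Set ℝ) (hSc : S.Countable)
    (hS : ∀ r ∈ S, c ≤ r ∧ r ≤ v) (l : Filter ℝ)
    (hcross : ∀ (y : ℝ → ℝ) (a b : ℝ), a < b → (∃ᶠ r in l, y r < a) → (∃ᶠ r in l, b < y r) →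
      ∀ k, ∃ t, UpChain y a b S k t)
    (ρ : ℕ → ℝ) (hρS : ∀ n, ρ n ∈ S) (hρ : Tendsto ρ atTop l) :
    ∃ V : Ω → ℝ, Integrable V μ ∧ ∀ᵐ ω ∂μ, Tendsto (fun r => Y r ω) l (nhds (V ω)) := by
  obtain ⟨R, hR⟩ := l1_bound hY c v
  have hR' : ∀ n, eLpNorm (Y (ρ n)) 1 μ ≤ R := fun n => hR _ (hS _ (hρS n)).1 (hS _ (hρS n)).2
  have hmeas : ∀ n, Measurable (Y (ρ n)) := fun n =>
    ((hY.stronglyMeasurable (ρ n)).mono (ℱ.le _)).measurable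
  have hlim := ae_bdd_liminf_atTop_of_eLpNorm_bdd one_ne_zero hmeas hR'
  have hup : ∀ᵐ ω ∂μ, ∀ a b : ℚ, a < b →
      ∃ k, ∀ t, ¬ UpChain (fun r => Y r ω) a b S k t := by
    rw [ae_all_iff]; intro a
    rw [ae_all_iff]; intro b
    by_cases hab : a < b
    · filter_upwards [ae_bounded_upchain hY (a := a) (b := b) (by exact_mod_cast hab) v S hSc
        (fun r hr => (hS r hr).2)] with ω hω _
      exact hω
    · exact Eventually.of_forall fun ω h => absurd h hab
  have hex : ∀ᵐ ω ∂μ, ∃ x, Tendsto (fun r => Y r ω) l (nhds x) := by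
    filter_upwards [hlim, hup] with ω hω hu
    have H : ∀ a b : ℚ, a < b →
        ¬((∃ᶠ r in l, Y r ω < a) ∧ ∃ᶠ r in l, (b : ℝ) < Y r ω) := by
      rintro a b hab ⟨h1, h2⟩
      obtain ⟨k, hk⟩ := hu a b hab
      obtain ⟨t, ht⟩ := hcross _ a b (by exact_mod_cast hab) h1 h2 k
      exact hk t ht
    obtain ⟨B, hB1, hB2⟩ := ENNReal.lt_iff_exists_nnreal_btwn.1 hω
    have hfr : ∃ᶠ n in atTop, ‖Y (ρ n) ω‖ₑ < B := frequently_lt_of_liminf_lt (by isBoundedDefault) hB1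
    have hfr' : ∃ᶠ r in l, |Y r ω| < B := by
      refine hρ.frequently (hfr.mono fun n hn => ?_)
      rw [enorm_eq_nnnorm] at hn
      have h : ‖Y (ρ n) ω‖₊ < B := by exact_mod_cast hn
      exact_mod_cast h
    obtain ⟨q, hq⟩ := exists_rat_gt (B : ℝ)
    refine tendsto_of_no_upcrossings (s := Set.range ((↑) : ℚ → ℝ)) Rat.denseRange_cast ?_ ?_ ?_
    · rintro _ ⟨a, rfl⟩ _ ⟨b, rfl⟩ hab
      exact H a b (by exact_mod_cast hab)
    · have h := H q (q + 1) (by linarith)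
      have h1 : ∃ᶠ r in l, Y r ω < q := hfr'.mono fun r hr => (abs_lt.1 hr).2.trans hq
      have h2 : ¬ ∃ᶠ r in l, ((q + 1 : ℚ) : ℝ) < Y r ω := fun h2 => h ⟨h1, h2⟩
      rw [not_frequently] at h2
      exact ⟨((q + 1 : ℚ) : ℝ), h2.mono fun r hr => not_lt.1 hr⟩
    · have h := H (-q - 1) (-q) (by linarith)
      have h1 : ∃ᶠ r in l, ((-q : ℚ) : ℝ) < Y r ω := hfr'.mono fun r hr => by
        push_cast
        linarith [(abs_lt.1 hr).1]
      have h2 : ¬ ∃ᶠ r in l, Y r ω < ((-q - 1 : ℚ) : ℝ) := fun h2 => h ⟨h2, h1⟩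
      rw [not_frequently] at h2
      exact ⟨((-q - 1 : ℚ) : ℝ), h2.mono fun r hr => not_lt.1 hr⟩
  have hch : ∀ ω, ∃ x, (∃ x, Tendsto (fun r => Y r ω) l (nhds x)) →
      Tendsto (fun r => Y r ω) l (nhds x) := by
    intro ω
    by_cases h : ∃ x, Tendsto (fun r => Y r ω) l (nhds x)
    · exact ⟨h.choose, fun _ => h.choose_spec⟩
    · exact ⟨0, fun h' => absurd h' h⟩
  choose V hV using hch
  have hVt : ∀ᵐ ω ∂μ, Tendsto (fun r => Y r ω) l (nhds (V ω)) := by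
    filter_upwards [hex] with ω hω using hV ω hω
  have hVs : ∀ᵐ ω ∂μ, Tendsto (fun n => Y (ρ n) ω) atTop (nhds (V ω)) := by
    filter_upwards [hVt] with ω hω using hω.comp hρ
  refine ⟨V, ?_, hVt⟩
  rw [← memLp_one_iff_integrable]
  refine ⟨aestronglyMeasurable_of_tendsto_ae atTop
    (fun n => (hmeas n).aestronglyMeasurable) hVs, ?_⟩
  have := Lp.eLpNorm_lim_le_liminf_eLpNorm (p := 1)
    (fun n => (hmeas n).aestronglyMeasurable) V hVs
  refine (this.trans ?_).trans_lt (ENNReal.coe_lt_top (r := R))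
  exact liminf_le_of_frequently_le' (Frequently.of_forall hR')

lemma fatou_real {f : ℕ → Ω → ℝ} {g : Ω → ℝ} {C : ℝ} (hf : ∀ n, Integrable (f n) μ)
    (hf0 : ∀ n, 0 ≤ᵐ[μ] f n) (hg : Integrable g μ) (hC : ∀ n, ∫ ω, f n ω ∂μ ≤ C)
    (hlim : ∀ᵐ ω ∂μ, Tendsto (fun n => f n ω) atTop (nhds (g ω))) :
    ∫ ω, g ω ∂μ ≤ C := by
  have h := Lp.eLpNorm_lim_le_liminf_eLpNorm (p := 1) (fun n => (hf n).aestronglyMeasurable) g hlim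
  have hC0 : 0 ≤ C := (integral_nonneg_of_ae (hf0 0)).trans (hC 0)
  have hb : ∀ n, eLpNorm (f n) 1 μ ≤ ENNReal.ofReal C := by
    intro n
    rw [eLpNorm_one_eq_lintegral_enorm, ← ofReal_integral_norm_eq_lintegral_enorm (hf n)]
    apply ENNReal.ofReal_le_ofReal
    refine le_trans (le_of_eq ?_) (hC n)
    refine integral_congr_ae ?_
    filter_upwards [hf0 n] with ω hω
    exact abs_of_nonneg hω
  have h2 : eLpNorm g 1 μ ≤ ENNReal.ofReal C :=
    h.trans (liminf_le_of_frequently_le' (Frequently.of_forall hb))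
  rw [eLpNorm_one_eq_lintegral_enorm, ← ofReal_integral_norm_eq_lintegral_enorm hg,
    ENNReal.ofReal_le_ofReal_iff hC0] at h2
  refine le_trans (integral_mono hg hg.norm fun ω => le_abs_self _) h2

end

section
variable {Ω : Type*} {m0 : MeasurableSpace Ω} {μ : Measure Ω}

lemma right_cross (u : ℝ) (D : Set ℝ) (y : ℝ → ℝ) (a b : ℝ)
    (h1 : ∃ᶠ r in nhdsWithin u (D ∩ Set.Ioi u), y r < a)
    (h2 : ∃ᶠ r in nhdsWithin u (D ∩ Set.Ioi u), b < y r) :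
    ∀ k t, u < t → t ≤ u + 1 → UpChain y a b (D ∩ Set.Ioo u (u + 1)) k t
  | 0, _, _, _ => trivial
  | k + 1, t, ht, ht1 => by
    have ev : ∀ t, u < t → ∀ᶠ r in nhdsWithin u (D ∩ Set.Ioi u), r < t ∧ r ∈ D ∩ Set.Ioi u :=
      fun t ht => (eventually_nhdsWithin_of_eventually_nhds (eventually_lt_nhds ht)).and
        eventually_mem_nhdsWithin
    obtain ⟨s, hs, hst, hsD, hsu⟩ := (h2.and_eventually (ev t ht)).exists
    obtain ⟨r, hr, hrs, hrD, hru⟩ := (h1.and_eventually (ev s hsu)).exists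
    exact ⟨r, ⟨hrD, hru, by linarith⟩, s, ⟨hsD, hsu, by linarith⟩, hrs, hst, hr, hs,
      right_cross u D y a b h1 h2 k r hru (by linarith)⟩

lemma left_cross (u : ℝ) (D : Set ℝ) (y : ℝ → ℝ) (a b : ℝ)
    (h1 : ∃ᶠ r in nhdsWithin u (D ∩ Set.Iio u), y r < a)
    (h2 : ∃ᶠ r in nhdsWithin u (D ∩ Set.Iio u), b < y r) :
    ∀ k, ∃ t, u - 1 < t ∧ t < u ∧ UpChain y a b (D ∩ Set.Ioo (u - 1) u) k t
  | 0 => ⟨u - 1 / 2, by linarith, by linarith, trivial⟩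
  | k + 1 => by
    have ev : ∀ t, t < u → ∀ᶠ r in nhdsWithin u (D ∩ Set.Iio u), t < r ∧ r ∈ D ∩ Set.Iio u :=
      fun t ht => (eventually_nhdsWithin_of_eventually_nhds (eventually_gt_nhds ht)).and
        eventually_mem_nhdsWithin
    obtain ⟨t, ht1, htu, hc⟩ := left_cross u D y a b h1 h2 k
    obtain ⟨r, hr, hrs, hrD, hru⟩ := (h1.and_eventually (ev t htu)).exists
    obtain ⟨s, hs, hst, hsD, hsu⟩ := (h2.and_eventually (ev r hru)).exists
    simp only [Set.mem_Iio] at hru hsu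
    exact ⟨(s + u) / 2, by linarith, by linarith, r, ⟨hrD, by linarith, hru⟩, s,
      ⟨hsD, by linarith, hsu⟩, hst, by linarith, hr, hs, hc.mono_time hrs.le⟩

lemma right_limit [IsProbabilityMeasure μ] {ℱ : Filtration ℝ m0} {Y : ℝ → Ω → ℝ}
    (hY : Submartingale Y ℱ μ) (u : ℝ) (D : Set ℝ) (hDcount : D.Countable)
    (ρ : ℕ → ℝ) (hρ : ∀ n, ρ n ∈ Set.Ioo u (u + 1) ∩ D) (hρt : Tendsto ρ atTop (nhds u)) :
    ∃ V : Ω → ℝ, Integrable V μ ∧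
      (∀ᵐ ω ∂μ, Tendsto (fun r : ℝ => Y r ω) (nhdsWithin u (D ∩ Set.Ioi u)) (nhds (V ω))) := by
  refine exists_limit hY u (u + 1) (D ∩ Set.Ioo u (u + 1)) (hDcount.mono Set.inter_subset_left)
    (fun r hr => ⟨hr.2.1.le, hr.2.2.le⟩) _ ?_ ρ (fun n => ⟨(hρ n).2, (hρ n).1⟩) ?_
  · intro y a b _ h1 h2 k
    exact ⟨u + 1, right_cross u D y a b h1 h2 k (u + 1) (by linarith) le_rfl⟩
  · exact tendsto_nhdsWithin_iff.2 ⟨hρt, Eventually.of_forall fun n => ⟨(hρ n).2, (hρ n).1.1⟩⟩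

lemma left_limit [IsProbabilityMeasure μ] {ℱ : Filtration ℝ m0} {Y : ℝ → Ω → ℝ}
    (hY : Submartingale Y ℱ μ) (u : ℝ) (D : Set ℝ) (hDcount : D.Countable)
    (ρ : ℕ → ℝ) (hρ : ∀ n, ρ n ∈ Set.Ioo (u - 1) u ∩ D) (hρt : Tendsto ρ atTop (nhds u)) :
    ∃ V : Ω → ℝ, Integrable V μ ∧
      (∀ᵐ ω ∂μ, Tendsto (fun r : ℝ => Y r ω) (nhdsWithin u (D ∩ Set.Iio u)) (nhds (V ω))) := by
  refine exists_limit hY (u - 1) u (D ∩ Set.Ioo (u - 1) u) (hDcount.mono Set.inter_subset_left)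
    (fun r hr => ⟨hr.2.1.le, hr.2.2.le⟩) _ ?_ ρ (fun n => ⟨(hρ n).2, (hρ n).1⟩) ?_
  · intro y a b _ h1 h2 k
    obtain ⟨t, -, -, h⟩ := left_cross u D y a b h1 h2 k
    exact ⟨t, h⟩
  · exact tendsto_nhdsWithin_iff.2 ⟨hρt, Eventually.of_forall fun n => ⟨(hρ n).2, (hρ n).1.2⟩⟩

lemma le_condExp_of_setIntegral_le [IsProbabilityMeasure μ] {m : MeasurableSpace Ω} (hm : m ≤ m0)
    {f V : Ω → ℝ} (hfm : StronglyMeasurable[m] f) (hf : Integrable f μ) (hV : Integrable V μ)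
    (h : ∀ s, MeasurableSet[m] s → ∫ ω in s, f ω ∂μ ≤ ∫ ω in s, V ω ∂μ) :
    f ≤ᵐ[μ] μ[V | m] := by
  suffices f ≤ᵐ[μ.trim hm] μ[V | m] by exact ae_le_of_ae_le_trim this
  suffices 0 ≤ᵐ[μ.trim hm] μ[V | m] - f by
    filter_upwards [this] with x hx
    rwa [← sub_nonneg]
  refine ae_nonneg_of_forall_setIntegral_nonneg
    ((integrable_condExp.sub hf).trim _ (stronglyMeasurable_condExp.sub hfm)) fun s hs _ => ?_
  specialize h s hs
  rwa [← setIntegral_trim _ (stronglyMeasurable_condExp.sub hfm) hs,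
    integral_sub' integrable_condExp.integrableOn hf.integrableOn, sub_nonneg,
    setIntegral_condExp hm hV hs]

end

/-- One-sided a.s. limits of an integrable submartingale along a countable dense
set D at a point u, with V = lim_{r↓u} Y_r satisfying E[V | F_u] ≥ Y_u and
V' = lim_{r↑u} Y_r satisfying E[Y_u | F_{u−}] ≥ V'. -/
theorem submartingale_one_sided_limits
    {Ω : Type*} {m0 : MeasurableSpace Ω} {μ : Measure Ω} [IsProbabilityMeasure μ]
    (ℱ : Filtration ℝ m0) (Y : ℝ → Ω → ℝ) (hY : Submartingale Y ℱ μ)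
    (u : ℝ) (D : Set ℝ) (hDcount : D.Countable) (hDdense : Dense D) :
    ∃ V V' : Ω → ℝ, Integrable V μ ∧ Integrable V' μ ∧
      (∀ᵐ ω ∂μ, Tendsto (fun r : ℝ => Y r ω) (nhdsWithin u (D ∩ Set.Ioi u)) (nhds (V ω))) ∧
      (∀ᵐ ω ∂μ, Tendsto (fun r : ℝ => Y r ω) (nhdsWithin u (D ∩ Set.Iio u)) (nhds (V' ω))) ∧
      Y u ≤ᵐ[μ] μ[V | ℱ u] ∧
      V' ≤ᵐ[μ] μ[Y u | ⨆ s : {s : ℝ // s < u}, ℱ s.1] := by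
  obtain ⟨ρ, -, hρ, hρt⟩ := hDdense.exists_seq_strictAnti_tendsto_of_lt (lt_add_one u)
  obtain ⟨σ, hσm, hσ, hσt⟩ := hDdense.exists_seq_strictMono_tendsto_of_lt (sub_one_lt u)
  obtain ⟨V, hVi, hV⟩ := right_limit hY u D hDcount ρ hρ hρt
  obtain ⟨V', hVi', hV'⟩ := left_limit hY u D hDcount σ hσ hσt
  refine ⟨V, V', hVi, hVi', hV, hV', ?_, ?_⟩
  · set v := u + 1 with hv
    have hM : Martingale (fun r => μ[Y v | ℱ r]) ℱ μ := martingale_condExp _ _ _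
    obtain ⟨M, hMi, hMt⟩ := right_limit hM.submartingale u D hDcount ρ hρ hρt
    have hρw : Tendsto ρ atTop (nhdsWithin u (D ∩ Set.Ioi u)) :=
      tendsto_nhdsWithin_iff.2 ⟨hρt, Eventually.of_forall fun n => ⟨(hρ n).2, (hρ n).1.1⟩⟩
    have hMs : ∀ᵐ ω ∂μ, Tendsto (fun n => (μ[Y v | ℱ (ρ n)]) ω) atTop (nhds (M ω)) := by
      filter_upwards [hMt] with ω hω using hω.comp hρw
    have hVs : ∀ᵐ ω ∂μ, Tendsto (fun n => Y (ρ n) ω) atTop (nhds (V ω)) := by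
      filter_upwards [hV] with ω hω using hω.comp hρw
    have hui := (hY.integrable v).uniformIntegrable_condExp (ℱ := fun n => ℱ (ρ n))
      (fun n => ℱ.le _)
    have hL1 := tendsto_Lp_finite_of_tendsto_ae le_rfl ENNReal.one_ne_top
      (fun n => integrable_condExp.aestronglyMeasurable) (memLp_one_iff_integrable.2 hMi) hui.2.1
      hMs
    refine le_condExp_of_setIntegral_le (ℱ.le u) (hY.stronglyMeasurable u) (hY.integrable u) hVi ?_
    intro s hs
    have hMint : ∀ n, ∫ ω in s, (μ[Y v | ℱ (ρ n)]) ω ∂μ = ∫ ω in s, Y v ω ∂μ := fun n =>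
      setIntegral_condExp (ℱ.le _) (hY.integrable v) (ℱ.mono (hρ n).1.1.le _ hs)
    have hM1 : ∫ ω in s, M ω ∂μ = ∫ ω in s, Y v ω ∂μ := by
      have := tendsto_setIntegral_of_L1' M hMi.aestronglyMeasurable
        (Eventually.of_forall fun n => integrable_condExp) hL1 s
      simp_rw [hMint] at this
      exact tendsto_nhds_unique this tendsto_const_nhds
    have hF : ∫ ω in s, (M ω - V ω) ∂μ ≤ ∫ ω in s, Y v ω ∂μ - ∫ ω in s, Y u ω ∂μ := by
      refine fatou_real (f := fun n ω => (μ[Y v | ℱ (ρ n)]) ω - Y (ρ n) ω)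
        (fun n => (integrable_condExp.sub (hY.integrable _)).integrableOn) (fun n => ?_)
        (hMi.sub hVi).integrableOn (fun n => ?_) ?_
      · refine ae_restrict_of_ae ?_
        filter_upwards [hY.ae_le_condExp (hρ n).1.2.le] with ω hω
        exact sub_nonneg.2 hω
      · rw [integral_sub integrable_condExp.integrableOn (hY.integrable _).integrableOn, hMint]
        linarith [hY.setIntegral_le (hρ n).1.1.le hs]
      · refine ae_restrict_of_ae ?_
        filter_upwards [hMs, hVs] with ω h1 h2 using h1.sub h2
    rw [integral_sub hMi.integrableOn hVi.integrableOn, hM1] at hF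
    linarith
  · have hlevy := tendsto_ae_condExp (μ := μ) (ℱ := sampleFiltration ℱ σ hσm.monotone) (Y u)
    have hsup : (⨆ n, sampleFiltration ℱ σ hσm.monotone n) = ⨆ s : {s : ℝ // s < u}, ℱ s.1 := by
      apply le_antisymm
      · exact iSup_le fun n => le_iSup (fun s : {s : ℝ // s < u} => ℱ s.1) ⟨σ n, (hσ n).1.2⟩
      · refine iSup_le fun s => ?_
        obtain ⟨n, hn⟩ := (hσt.eventually (eventually_gt_nhds s.2)).exists
        exact (ℱ.mono hn.le).trans (le_iSup (fun n => sampleFiltration ℱ σ hσm.monotone n) n)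
    rw [hsup] at hlevy
    have hle : ∀ᵐ ω ∂μ, ∀ n, Y (σ n) ω ≤ (μ[Y u | ℱ (σ n)]) ω :=
      ae_all_iff.2 fun n => hY.ae_le_condExp (hσ n).1.2.le
    have hσw : Tendsto σ atTop (nhdsWithin u (D ∩ Set.Iio u)) :=
      tendsto_nhdsWithin_iff.2 ⟨hσt, Eventually.of_forall fun n => ⟨(hσ n).2, (hσ n).1.2⟩⟩
    filter_upwards [hlevy, hle, hV'] with ω h1 h2 h3
    exact le_of_tendsto_of_tendsto' (h3.comp hσw) h1 h2
end
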